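/- arXiv:1006.2560 — 2 statements merged into one kernel-verified Lean document; each statement's English description precedes it below -/
import Mathlib

section
/- Let Γ be a discrete polymatroid, let m and m' be bases of Γ, and let i be an index with d_i(m) > d_i(m'). Then there exists an index j with d_j(m) < d_j(m') such that both m − e_i + e_j and m' + e_i − e_j are bases of Γ. -/
/-- The total degree of a monomial (exponent vector). -/
def monDeg (m : ℕ →₀ ℕ) : ℕ := m.sum fun _ v => v

/-- A discrete polymatroid: a finite, divisibility-closed set of monomials
satisfying the exchange property. -/
def IsDiscretePolymatroid (Γ : Set (ℕ →₀ ℕ)) : Prop :=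
  Γ.Finite ∧
  (∀ m ∈ Γ, ∀ m' : ℕ →₀ ℕ, m' ≤ m → m' ∈ Γ) ∧
  (∀ m ∈ Γ, ∀ m' ∈ Γ, monDeg m' < monDeg m →
    ∃ i, m' i < m i ∧ m' + Finsupp.single i 1 ∈ Γ)

/-- A basis of `Γ`: a maximal element under divisibility. -/
def IsBasisOf (Γ : Set (ℕ →₀ ℕ)) (m : ℕ →₀ ℕ) : Prop :=
  m ∈ Γ ∧ ∀ m' ∈ Γ, m ≤ m' → m' = m

/-!
For a basis `m'`, let `c` be the part of `m'` supported on the variables `x_j` for which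
`m' + e_i - e_j ∈ Γ`. Then `c + e_i ∉ Γ`: otherwise it would extend inside `m' + e_i` to some
`m' + e_i - e_j ∈ Γ`, although `c + e_i` and `m' + e_i` have the same exponent at such a `j`.
This `c + e_i` plays the role of the fundamental circuit of `i` with respect to `m'`.
Extending `c` inside `c ⊔ m` to the degree of `m` cannot raise the exponent of `x_i`, so exchanging
the result against `m - e_i` produces an index `j ≠ i` with `m j < c j`, and such a `j` works for
both bases.
-/

open Finsupp

section Monomials

variable {σ : Type*} {a b : σ →₀ ℕ} {j : σ}

theorem eq_of_le_of_degree_le (hab : a ≤ b) (hdeg : b.degree ≤ a.degree) : a = b := by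
  obtain ⟨c, rfl⟩ := exists_add_of_le hab
  have hc : c.degree = 0 := by
    rw [map_add] at hdeg
    lia
  rw [(degree_eq_zero_iff c).mp hc, add_zero]

theorem add_single_one_le (hab : a ≤ b) (hj : a j < b j) : a + single j 1 ≤ b := by
  intro k
  obtain rfl | hkj := eq_or_ne k j
  · simpa using hj
  · simpa [single_eq_of_ne hkj] using hab k

theorem exists_add_single_one_eq (hab : a ≤ b) (hdeg : b.degree = a.degree + 1) :
    ∃ j, a + single j 1 = b := by
  have hlt : a < b := hab.lt_of_ne fun h => by simp [h] at hdeg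
  obtain ⟨-, j, hj⟩ := Finsupp.lt_def.mp hlt
  exact ⟨j, eq_of_le_of_degree_le (add_single_one_le hab hj) (by simp [hdeg])⟩

theorem degree_sub_single_one_add_one (hj : a j ≠ 0) : (a - single j 1).degree + 1 = a.degree := by
  have hsub : a - single j 1 + single j 1 = a :=
    tsub_add_cancel_of_le (single_le_iff.mpr (Nat.one_le_iff_ne_zero.mpr hj))
  simpa using congrArg degree hsub

end Monomials

/-- A discrete polymatroid in an arbitrary set `σ` of variables, not required to contain only
finitely many monomials. Its bases are encoded as `Maximal (· ∈ Γ)`. -/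
structure IsPolymatroidal {σ : Type*} (Γ : Set (σ →₀ ℕ)) : Prop where
  isLowerSet : IsLowerSet Γ
  exists_add_single_mem : ∀ {a b : σ →₀ ℕ}, a ∈ Γ → b ∈ Γ → a.degree < b.degree →
    ∃ i, a i < b i ∧ a + single i 1 ∈ Γ

namespace IsPolymatroidal

variable {σ : Type*} {Γ : Set (σ →₀ ℕ)} {a c m : σ →₀ ℕ} {i : σ}

theorem exists_le_mem_le_sup_degree_eq {a b : σ →₀ ℕ} (hΓ : IsPolymatroidal Γ) (ha : a ∈ Γ)
    (hb : b ∈ Γ) (hdeg : a.degree ≤ b.degree) :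
    ∃ v ∈ Γ, a ≤ v ∧ v ≤ a ⊔ b ∧ v.degree = b.degree := by
  obtain heq | hlt := hdeg.eq_or_lt
  · exact ⟨a, ha, le_rfl, le_sup_left, heq⟩
  obtain ⟨k, hk, hak⟩ := hΓ.exists_add_single_mem ha hb hlt
  obtain ⟨v, hv, hav, hvb, hvdeg⟩ := hΓ.exists_le_mem_le_sup_degree_eq hak hb (by simpa using hlt)
  have hle : a + single k 1 ≤ a ⊔ b := add_single_one_le le_sup_left (by simpa using hk)
  exact ⟨v, hv, le_self_add.trans hav, hvb.trans (sup_le hle le_sup_right), hvdeg⟩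
termination_by b.degree - a.degree
decreasing_by
  simp only [map_add, degree_single]
  lia

theorem degree_le_of_maximal (hΓ : IsPolymatroidal Γ) (hm : Maximal (· ∈ Γ) m) (ha : a ∈ Γ) :
    a.degree ≤ m.degree := by
  by_contra! hlt
  obtain ⟨k, -, hk⟩ := hΓ.exists_add_single_mem hm.prop ha hlt
  simpa using hm.eq_of_le hk le_self_add

theorem maximal_of_degree_eq (hΓ : IsPolymatroidal Γ) (hm : Maximal (· ∈ Γ) m) (ha : a ∈ Γ)
    (hdeg : a.degree = m.degree) : Maximal (· ∈ Γ) a :=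
  ⟨ha, fun _ hb hab =>
    (eq_of_le_of_degree_le hab (hdeg ▸ hΓ.degree_le_of_maximal hm hb)).ge⟩

theorem exists_circuit (hΓ : IsPolymatroidal Γ) (hm : Maximal (· ∈ Γ) m) (i : σ) :
    ∃ c ≤ m, c + single i 1 ∉ Γ ∧ ∀ j ∈ c.support, m + single i 1 - single j 1 ∈ Γ := by
  classical
  let c := m.filter fun j => m + single i 1 - single j 1 ∈ Γ
  have hcm : c ≤ m := fun j => by
    simp only [c, filter_apply]
    split_ifs <;> simp
  refine ⟨c, hcm, fun hci => ?_, fun j hj => (Finset.mem_filter.mp hj).2⟩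
  obtain ⟨w, hw, hcw, hwm, hwdeg⟩ :=
    hΓ.exists_le_mem_le_sup_degree_eq hci hm.prop (hΓ.degree_le_of_maximal hm hci)
  have hwle : w ≤ m + single i 1 := hwm.trans (sup_le (by gcongr) le_self_add)
  obtain ⟨j, hj⟩ := exists_add_single_one_eq hwle (by simp [hwdeg])
  have hcj : c j = m j := filter_apply_pos _ _ (by rwa [← hj, add_tsub_cancel_right])
  have hwj : w j + 1 = m j + single i 1 j := by simpa using DFunLike.congr_fun hj j
  have hcwj : c j + single i 1 j ≤ w j := hcw j
  lia

theorem exists_sub_single_add_single_mem (hΓ : IsPolymatroidal Γ) (hm : Maximal (· ∈ Γ) m)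
    (hc : c ∈ Γ) (hci : c + single i 1 ∉ Γ) (hi : c i < m i) :
    ∃ j, m j < c j ∧ m - single i 1 + single j 1 ∈ Γ := by
  obtain ⟨v, hv, hcv, hvm, hvdeg⟩ :=
    hΓ.exists_le_mem_le_sup_degree_eq hc hm.prop (hΓ.degree_le_of_maximal hm hc)
  have hvi : v i ≤ c i := by
    by_contra! hlt
    exact hci (hΓ.isLowerSet (add_single_one_le hcv hlt) hv)
  have hdeg : (m - single i 1).degree < v.degree := by
    have := degree_sub_single_one_add_one (a := m) (j := i) (by lia)
    lia
  obtain ⟨j, hj, hmem⟩ :=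
    hΓ.exists_add_single_mem (hΓ.isLowerSet tsub_le_self hm.prop) hv hdeg
  rw [tsub_apply] at hj
  have hji : j ≠ i := by
    rintro rfl
    rw [single_eq_same] at hj
    lia
  rw [single_eq_of_ne hji, tsub_zero] at hj
  have hvj : v j ≤ c j ⊔ m j := hvm j
  exact ⟨j, by lia, hmem⟩

end IsPolymatroidal

theorem stmt12_general {σ : Type*} {Γ : Set (σ →₀ ℕ)} (hΓ : IsPolymatroidal Γ) {m m' : σ →₀ ℕ}
    (hm : Maximal (· ∈ Γ) m) (hm' : Maximal (· ∈ Γ) m') {i : σ} (hi : m' i < m i) :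
    ∃ j, m j < m' j ∧
      Maximal (· ∈ Γ) (m - single i 1 + single j 1) ∧
      Maximal (· ∈ Γ) (m' + single i 1 - single j 1) := by
  obtain ⟨c, hcm', hci, hc⟩ := hΓ.exists_circuit hm' i
  obtain ⟨j, hj, hmem⟩ := hΓ.exists_sub_single_add_single_mem hm
    (hΓ.isLowerSet hcm' hm'.prop) hci ((hcm' i).trans_lt hi)
  have hjm' : m j < m' j := hj.trans_le (hcm' j)
  have hmem' : m' + single i 1 - single j 1 ∈ Γ := hc j (mem_support_iff.mpr hj.ne_bot)
  refine ⟨j, hjm', hΓ.maximal_of_degree_eq hm hmem ?_, hΓ.maximal_of_degree_eq hm' hmem' ?_⟩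
  · simpa using degree_sub_single_one_add_one (a := m) hi.ne_bot
  · have hne : (m' + single i 1 : σ →₀ ℕ) j ≠ 0 := by
      rw [Finsupp.add_apply]
      lia
    simpa using degree_sub_single_one_add_one hne

theorem monDeg_eq_degree (m : ℕ →₀ ℕ) : monDeg m = m.degree := rfl

theorem IsDiscretePolymatroid.isPolymatroidal {Γ : Set (ℕ →₀ ℕ)} (hΓ : IsDiscretePolymatroid Γ) :
    IsPolymatroidal Γ where
  isLowerSet := fun m m' hle hm => hΓ.2.1 m hm m' hle
  exists_add_single_mem := fun {a b} ha hb hdeg =>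
    hΓ.2.2 b hb a ha (by simpa only [monDeg_eq_degree] using hdeg)

theorem isBasisOf_iff_maximal {Γ : Set (ℕ →₀ ℕ)} {m : ℕ →₀ ℕ} :
    IsBasisOf Γ m ↔ Maximal (· ∈ Γ) m := by
  simp only [IsBasisOf, maximal_iff, eq_comm]

/-- The symmetric exchange property for discrete polymatroids: if `m, m'` are
bases and `d_i(m) > d_i(m')`, then there is `j` with `d_j(m) < d_j(m')` such
that `m - e_i + e_j` and `m' + e_i - e_j` are both bases. -/
theorem stmt12 (Γ : Set (ℕ →₀ ℕ)) (hΓ : IsDiscretePolymatroid Γ)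
    (m m' : ℕ →₀ ℕ) (hm : IsBasisOf Γ m) (hm' : IsBasisOf Γ m')
    (i : ℕ) (hi : m' i < m i) :
    ∃ j, m j < m' j ∧
      IsBasisOf Γ (m - Finsupp.single i 1 + Finsupp.single j 1) ∧
      IsBasisOf Γ (m' + Finsupp.single i 1 - Finsupp.single j 1) := by
  simp only [isBasisOf_iff_maximal] at hm hm' ⊢
  exact stmt12_general hΓ.isPolymatroidal hm hm' hi
end

section
/- Let α ⪰ ω be lattice paths from (0,0) to (n,r). For a lattice path σ to (n,r) with N(σ) = {a_1 < a_2 < ⋯ < a_r}, let σ̄ be the lattice path to (n+r, r) with N(σ̄) = {a_1 + 1, a_2 + 2, …, a_r + r}. Then (i) m(σ̄) = x_{a_1} x_{a_2} ⋯ x_{a_r}, i.e., the exponent vector of m(σ̄) is the indicator function of N(σ); and (ii) a lattice path τ to (n+r, r) with ᾱ ⪰ τ ⪰ ω̄ is equal to σ̄ for some lattice path σ with α ⪰ σ ⪰ ω if and only if m(τ) is squarefree (every exponent of m(τ) is at most 1). In particular σ ↦ σ̄ is a bijection from {σ : α ⪰ σ ⪰ ω} onto the set of paths τ with ᾱ ⪰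 τ ⪰ ω̄ and m(τ) squarefree. -/
/-- A lattice path from `(0,0)` to `(n,r)`, encoded by the set of positions of
its north steps among its `n + r` steps. -/
def IsLatticePath (n r : ℕ) (σ : Finset ℕ) : Prop :=
  σ ⊆ Finset.Icc 1 (n + r) ∧ σ.card = r

/-- `σ ⪰ τ`: each element of `N(σ)`, in increasing order, is at most the
corresponding element of `N(τ)`. -/
def PathAbove (σ τ : Finset ℕ) : Prop :=
  ∀ k (h1 : k < (σ.sort (· ≤ ·)).length) (h2 : k < (τ.sort (· ≤ ·)).length),
    (σ.sort (· ≤ ·)).get ⟨k, h1⟩ ≤ (τ.sort (· ≤ ·)).get ⟨k, h2⟩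

/-- The number of east steps of `σ` before position `a`. -/
def eastBefore (σ : Finset ℕ) (a : ℕ) : ℕ :=
  ((Finset.Icc 1 (a - 1)).filter (fun b => b ∉ σ)).card

/-- The monomial `m(σ)` of a lattice path: the exponent of `x_i` is the number
of north steps of `σ` along the line `x = i`. -/
noncomputable def pathMonomial (σ : Finset ℕ) : ℕ →₀ ℕ :=
  ∑ a ∈ σ, Finsupp.single (eastBefore σ a) 1

/-- The bases of the lattice path polymatroid `Γ(α, ω)`: the monomials `m(σ)`
for lattice paths `σ` with `α ⪰ σ ⪰ ω`. -/
def IsLPBasis (n r : ℕ) (α ω : Finset ℕ) (m : ℕ →₀ ℕ) : Prop :=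
  ∃ σ : Finset ℕ, IsLatticePath n r σ ∧ PathAbove α σ ∧ PathAbove σ ω ∧ m = pathMonomial σ

/-- The path `σ̄`: if `N(σ) = {a_1 < a_2 < ⋯ < a_r}`, then
`N(σ̄) = {a_1 + 1, a_2 + 2, …, a_r + r}`. -/
def barPath (σ : Finset ℕ) : Finset ℕ :=
  ((σ.sort (· ≤ ·)).mapIdx fun k a => a + k + 1).toFinset

/-!
Let `a₁ < ⋯ < a_r` be the north steps of a path `τ`. There are `k - 1` north steps before `a_k`, so
`a_k` lies on the line `x = a_k - k`. Hence `σ ↦ σ̄` is inverted by sending a path to its set of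
vertical lines that carry a north step. This set has `r` elements exactly when the north steps
lie on distinct lines, i.e. when `m(τ)` is squarefree, and the shift by `(1, 2, …, r)` preserves
the componentwise order.
-/

section Enumeration

open Finset

variable {α : Type*} [LinearOrder α] {r : ℕ}

theorem card_filter_lt_orderEmbOfFin (s : Finset α) (h : #s = r) (k : Fin r) :
    #{b ∈ s | b < s.orderEmbOfFin h k} = k := by
  have filter_eq_image : {b ∈ s | b < s.orderEmbOfFin h k} = (Iio k).image (s.orderEmbOfFin h) := by
    ext b
    rw [mem_filter, ← mem_coe, ← range_orderEmbOfFin s h]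
    simp only [Set.mem_range, mem_image, mem_Iio]
    constructor
    · rintro ⟨⟨i, rfl⟩, hi⟩
      exact ⟨i, (s.orderEmbOfFin h).lt_iff_lt.mp hi, rfl⟩
    · rintro ⟨i, hi, rfl⟩
      exact ⟨⟨i, rfl⟩, (s.orderEmbOfFin h).lt_iff_lt.mpr hi⟩
  rw [filter_eq_image, card_image_of_injective _ (s.orderEmbOfFin h).injective, Fin.card_Iio]

theorem orderEmbOfFin_image {β : Type*} [LinearOrder β] {s : Finset α} (h : #s = r) {f : α → β}
    (hf : StrictMonoOn f s) (h' : #(s.image f) = r) (k : Fin r) :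
    (s.image f).orderEmbOfFin h' k = f (s.orderEmbOfFin h k) :=
  (congrFun (orderEmbOfFin_unique h' (f := f ∘ s.orderEmbOfFin h)
    (fun i ↦ mem_image_of_mem f (s.orderEmbOfFin_mem h i))
    fun i j hij ↦ hf (s.orderEmbOfFin_mem h i) (s.orderEmbOfFin_mem h j)
      ((s.orderEmbOfFin h).strictMono hij)) k).symm

end Enumeration

section BarPath

open Finset

variable {n r : ℕ} {σ τ α ω : Finset ℕ}

theorem pathAbove_iff_orderEmbOfFin_le (hσ : #σ = r) (hτ : #τ = r) :
    PathAbove σ τ ↔ ∀ k, σ.orderEmbOfFin hσ k ≤ τ.orderEmbOfFin hτ k := by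
  simp only [PathAbove, length_sort, hσ, hτ, orderEmbOfFin_apply, Fin.forall_iff,
    List.get_eq_getElem, Fin.getElem_fin]
  exact ⟨fun h k hk ↦ h k hk hk, fun h k hk _ ↦ h k hk⟩

theorem isLatticePath_iff_orderEmbOfFin_mem_Icc (hσ : #σ = r) :
    IsLatticePath n r σ ↔ ∀ k, σ.orderEmbOfFin hσ k ∈ Icc 1 (n + r) := by
  conv_lhs => rw [IsLatticePath, ← image_orderEmbOfFin_univ σ hσ, image_subset_iff]
  simp [hσ]

theorem IsLatticePath.of_pathAbove (hα : IsLatticePath n r α) (hω : IsLatticePath n r ω)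
    (hσ : #σ = r) (hασ : PathAbove α σ) (hσω : PathAbove σ ω) : IsLatticePath n r σ := by
  rw [isLatticePath_iff_orderEmbOfFin_mem_Icc hσ]
  intro k
  have lower := (mem_Icc.mp (hα.1 (α.orderEmbOfFin_mem hα.2 k))).1
  have upper := (mem_Icc.mp (hω.1 (ω.orderEmbOfFin_mem hω.2 k))).2
  exact mem_Icc.mpr
    ⟨lower.trans ((pathAbove_iff_orderEmbOfFin_le hα.2 hσ).mp hασ k),
      ((pathAbove_iff_orderEmbOfFin_le hσ hω.2).mp hσω k).trans upper⟩

theorem IsLatticePath.zero_notMem (hσ : IsLatticePath n r σ) : 0 ∉ σ :=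
  fun h ↦ absurd (mem_Icc.mp (hσ.1 h)).1 (by simp)

theorem eastBefore_mono (σ : Finset ℕ) : Monotone (eastBefore σ) := fun _ _ h ↦
  card_le_card (filter_subset_filter _ (Icc_subset_Icc_right (Nat.sub_le_sub_right h 1)))

theorem eastBefore_add_card_filter_lt (hσ : 0 ∉ σ) (a : ℕ) :
    eastBefore σ a + #{b ∈ σ | b < a} = a - 1 := by
  have north_before : {b ∈ σ | b < a} = {b ∈ Icc 1 (a - 1) | b ∈ σ} := by
    ext b
    have : b ∈ σ → b ≠ 0 := fun hb h ↦ hσ (h ▸ hb)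
    simp only [mem_filter, mem_Icc]
    grind
  rw [north_before, eastBefore, add_comm, card_filter_add_card_filter_not, Nat.card_Icc,
    Nat.add_sub_cancel]

theorem eastBefore_orderEmbOfFin_add_add_one (hσ : 0 ∉ σ) (h : #σ = r) (k : Fin r) :
    eastBefore σ (σ.orderEmbOfFin h k) + k + 1 = σ.orderEmbOfFin h k := by
  have step_ne_zero : σ.orderEmbOfFin h k ≠ 0 := fun h0 ↦ hσ (h0 ▸ σ.orderEmbOfFin_mem h k)
  have count := eastBefore_add_card_filter_lt hσ (σ.orderEmbOfFin h k)
  rw [card_filter_lt_orderEmbOfFin] at count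
  omega

/-- The `x`-coordinates of the vertical lines along which `σ` has a north step, i.e. the support
of the monomial `m(σ)`. As a set of step positions, it is the path that `barPath` sends to `σ`
whenever there is one. -/
def northLines (σ : Finset ℕ) : Finset ℕ :=
  σ.image (eastBefore σ)

theorem pathMonomial_apply (σ : Finset ℕ) (i : ℕ) :
    pathMonomial σ i = #{a ∈ σ | eastBefore σ a = i} := by
  simp [pathMonomial, Finsupp.finsetSum_apply, Finsupp.single_apply]

theorem pathMonomial_le_one_iff_injOn :
    (∀ i, pathMonomial σ i ≤ 1) ↔ Set.InjOn (eastBefore σ) σ := by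
  simp only [pathMonomial_apply, card_le_one, mem_filter]
  exact ⟨fun h a ha b hb hab ↦ h _ a ⟨ha, hab⟩ b ⟨hb, rfl⟩,
    fun h i a ha b hb ↦ h ha.1 hb.1 (ha.2.trans hb.2.symm)⟩

theorem pathMonomial_eq_sum_northLines (hσ : Set.InjOn (eastBefore σ) σ) :
    pathMonomial σ = ∑ i ∈ northLines σ, Finsupp.single i 1 :=
  (sum_image (f := fun i ↦ Finsupp.single i 1) hσ).symm

theorem barPath_eq_image (h : #σ = r) :
    barPath σ = univ.image fun k : Fin r ↦ σ.orderEmbOfFin h k + k + 1 := by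
  ext b
  simp only [barPath, List.mem_toFinset, List.mem_mapIdx, length_sort, h, mem_image, mem_univ,
    true_and, Fin.exists_iff, orderEmbOfFin_apply, Fin.getElem_fin]

theorem strictMono_orderEmbOfFin_add_add_one (h : #σ = r) :
    StrictMono fun k : Fin r ↦ σ.orderEmbOfFin h k + k + 1 := fun _ _ hij ↦
  Nat.add_lt_add_right (Nat.add_lt_add ((σ.orderEmbOfFin h).strictMono hij) hij) 1

@[simp]
theorem card_barPath (σ : Finset ℕ) : #(barPath σ) = #σ := by
  rw [barPath_eq_image rfl,
    card_image_of_injective _ (strictMono_orderEmbOfFin_add_add_one rfl).injective, card_univ,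
    Fintype.card_fin]

theorem orderEmbOfFin_barPath (h : #σ = r) (h' : #(barPath σ) = r) (k : Fin r) :
    (barPath σ).orderEmbOfFin h' k = σ.orderEmbOfFin h k + k + 1 := by
  have step_mem (i : Fin r) : σ.orderEmbOfFin h i + i + 1 ∈ barPath σ := by
    rw [barPath_eq_image h]
    exact mem_image_of_mem _ (mem_univ i)
  exact (congrFun
    (orderEmbOfFin_unique h' step_mem (strictMono_orderEmbOfFin_add_add_one h)) k).symm

theorem zero_notMem_barPath (σ : Finset ℕ) : 0 ∉ barPath σ := by
  simp [barPath_eq_image rfl]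

theorem pathAbove_barPath_iff (h : #σ = #τ) :
    PathAbove (barPath σ) (barPath τ) ↔ PathAbove σ τ := by
  rw [pathAbove_iff_orderEmbOfFin_le ((card_barPath σ).trans h) (card_barPath τ),
    pathAbove_iff_orderEmbOfFin_le h rfl]
  simp only [orderEmbOfFin_barPath h, orderEmbOfFin_barPath rfl, Nat.add_le_add_iff_right]

theorem isLatticePath_barPath (hσ : IsLatticePath n r σ) :
    IsLatticePath (n + r) r (barPath σ) := by
  rw [isLatticePath_iff_orderEmbOfFin_mem_Icc ((card_barPath σ).trans hσ.2)]
  intro k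
  have step_mem := mem_Icc.mp (hσ.1 (σ.orderEmbOfFin_mem hσ.2 k))
  rw [orderEmbOfFin_barPath hσ.2, mem_Icc]
  omega

theorem northLines_barPath (σ : Finset ℕ) : northLines (barPath σ) = σ := by
  have eastBefore_step (k : Fin #σ) :
      eastBefore (barPath σ) (σ.orderEmbOfFin rfl k + k + 1) = σ.orderEmbOfFin rfl k := by
    have := eastBefore_orderEmbOfFin_add_add_one (zero_notMem_barPath σ) (card_barPath σ) k
    rw [orderEmbOfFin_barPath rfl] at this
    omega
  calc northLines (barPath σ)
      = univ.image fun k : Fin #σ ↦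
          eastBefore (barPath σ) (σ.orderEmbOfFin rfl k + k + 1) := by
        rw [northLines]
        nth_rw 2 [barPath_eq_image rfl]
        exact image_image
    _ = univ.image (σ.orderEmbOfFin rfl) := by simp only [eastBefore_step]
    _ = σ := image_orderEmbOfFin_univ σ rfl

theorem barPath_injective : Function.Injective barPath :=
  Function.LeftInverse.injective northLines_barPath

theorem injOn_eastBefore_barPath (σ : Finset ℕ) :
    Set.InjOn (eastBefore (barPath σ)) (barPath σ) :=
  card_image_iff.mp <| (congrArg card (northLines_barPath σ)).trans (card_barPath σ).symm

theorem pathMonomial_barPath (σ : Finset ℕ) :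
    pathMonomial (barPath σ) = ∑ a ∈ σ, Finsupp.single a 1 := by
  rw [pathMonomial_eq_sum_northLines (injOn_eastBefore_barPath σ), northLines_barPath]

theorem barPath_northLines (h0 : 0 ∉ τ) (hτ : Set.InjOn (eastBefore τ) τ) :
    barPath (northLines τ) = τ := by
  have hcard : #(northLines τ) = #τ := card_image_iff.mpr hτ
  have enum_northLines := orderEmbOfFin_image rfl
    (((eastBefore_mono τ).monotoneOn _).strictMonoOn_of_injOn hτ) hcard
  calc barPath (northLines τ)
      = univ.image fun k : Fin #τ ↦ (northLines τ).orderEmbOfFin hcard k + k + 1 :=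
        barPath_eq_image hcard
    _ = univ.image (τ.orderEmbOfFin rfl) := by
        simp only [northLines, enum_northLines, eastBefore_orderEmbOfFin_add_add_one h0]
    _ = τ := image_orderEmbOfFin_univ τ rfl

theorem exists_eq_barPath_iff_injOn (h0 : 0 ∉ τ) :
    (∃ σ, τ = barPath σ) ↔ Set.InjOn (eastBefore τ) τ :=
  ⟨fun ⟨σ, hσ⟩ ↦ hσ ▸ injOn_eastBefore_barPath σ,
    fun h ↦ ⟨northLines τ, (barPath_northLines h0 h).symm⟩⟩

theorem exists_between_eq_barPath_iff (hα : IsLatticePath n r α) (hω : IsLatticePath n r ω)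
    (hτ : IsLatticePath (n + r) r τ) (hατ : PathAbove (barPath α) τ)
    (hτω : PathAbove τ (barPath ω)) :
    (∃ σ, IsLatticePath n r σ ∧ PathAbove α σ ∧ PathAbove σ ω ∧ τ = barPath σ) ↔
      ∀ i, pathMonomial τ i ≤ 1 := by
  rw [pathMonomial_le_one_iff_injOn, ← exists_eq_barPath_iff_injOn hτ.zero_notMem]
  refine ⟨fun ⟨σ, _, _, _, hσ⟩ ↦ ⟨σ, hσ⟩, ?_⟩
  rintro ⟨σ, rfl⟩
  have hσ : #σ = r := (card_barPath σ).symm.trans hτ.2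
  have hασ := (pathAbove_barPath_iff (hα.2.trans hσ.symm)).mp hατ
  have hσω := (pathAbove_barPath_iff (hσ.trans hω.2.symm)).mp hτω
  exact ⟨σ, hα.of_pathAbove hω hσ hασ hσω, hασ, hσω, rfl⟩

end BarPath

/-- (i) `m(σ̄)` is the squarefree monomial `∏_{a ∈ N(σ)} x_a`; (ii) a path `τ`
between `ᾱ` and `ω̄` is of the form `σ̄` for a path `σ` between `α` and `ω` iff
`m(τ)` is squarefree; and the map `σ ↦ σ̄` is a bijection from the paths
between `α` and `ω` onto the paths between `ᾱ` and `ω̄` with squarefree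
monomial. -/
theorem stmt13 (n r : ℕ) (hn : 0 < n) (hr : 0 < r) (α ω : Finset ℕ)
    (hα : IsLatticePath n r α) (hω : IsLatticePath n r ω) (hαω : PathAbove α ω) :
    (∀ σ : Finset ℕ, IsLatticePath n r σ →
      pathMonomial (barPath σ) = ∑ a ∈ σ, Finsupp.single a 1) ∧
    (∀ τ : Finset ℕ, IsLatticePath (n + r) r τ →
      PathAbove (barPath α) τ → PathAbove τ (barPath ω) →
      ((∃ σ : Finset ℕ, IsLatticePath n r σ ∧ PathAbove α σ ∧ PathAbove σ ω ∧
          τ = barPath σ) ↔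
        ∀ i, pathMonomial τ i ≤ 1)) ∧
    Set.BijOn barPath
      {σ : Finset ℕ | IsLatticePath n r σ ∧ PathAbove α σ ∧ PathAbove σ ω}
      {τ : Finset ℕ | IsLatticePath (n + r) r τ ∧ PathAbove (barPath α) τ ∧
        PathAbove τ (barPath ω) ∧ ∀ i, pathMonomial τ i ≤ 1} := by
  refine ⟨fun σ _ ↦ pathMonomial_barPath σ,
    fun τ hτ hατ hτω ↦ exists_between_eq_barPath_iff hα hω hτ hατ hτω,
    ?mapsTo, barPath_injective.injOn, ?surjOn⟩
  case mapsTo =>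
    rintro σ ⟨hσ, hασ, hσω⟩
    exact ⟨isLatticePath_barPath hσ, (pathAbove_barPath_iff (hα.2.trans hσ.2.symm)).mpr hασ,
      (pathAbove_barPath_iff (hσ.2.trans hω.2.symm)).mpr hσω,
      pathMonomial_le_one_iff_injOn.mpr (injOn_eastBefore_barPath σ)⟩
  case surjOn =>
    rintro τ ⟨hτ, hατ, hτω, squarefree⟩
    obtain ⟨σ, hσ, hασ, hσω, rfl⟩ :=
      (exists_between_eq_barPath_iff hα hω hτ hατ hτω).mpr squarefree
    exact ⟨σ, ⟨hσ, hασ, hσω⟩, rfl⟩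
end
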